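/- arXiv:1411.6332 — 2 statements merged into one kernel-verified Lean document; each statement's English description precedes it below -/
import Mathlib

section
/- For every q ∈ [1,∞) there exists a positive constant C_q such that for all t ≥ 0, ‖∂_x U^r(t,·)‖_{L^q(ℝ)} ≤ C_q (1+t)^{−1+1/q} and ‖∂_x² U^r(t,·)‖_{L^q(ℝ)} ≤ C_q (1+t)^{−1}; moreover there exists C > 0 such that sup_{x∈ℝ}|∂_x U^r(t,x)| ≤ C(1+t)^{−1} and sup_{x∈ℝ}|∂_x² U^r(t,x)| ≤ C(1+t)^{−1} for all t ≥ 0. -/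
open Real MeasureTheory Filter Set

/-- The smooth monotone initial datum `w₀(x) = (w₋+w₊)/2 + ((w₊−w₋)/2)·tanh x`. -/
noncomputable def w0 (wm wp x : ℝ) : ℝ := (wm + wp) / 2 + ((wp - wm) / 2) * Real.tanh x

theorem aux_lintegral (H h : ℝ → ℝ) (M : ℝ) (hd : ∀ x, HasDerivAt H (h x) x)
    (h0 : ∀ x, 0 ≤ h x) (hM : ∀ x, |H x| ≤ M) :
    ∫⁻ x, ENNReal.ofReal (h x) ≤ ENNReal.ofReal (2 * M) := by
  have hU : (⋃ n : ℕ, Ioc (-(n : ℝ)) n) = univ := by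
    refine eq_univ_of_forall fun x => ?_
    obtain ⟨n, hn⟩ := exists_nat_gt |x|
    have := abs_lt.mp hn
    exact mem_iUnion.mpr ⟨n, this.1, this.2.le⟩
  have hdir : Directed (· ⊆ ·) (fun n : ℕ => Ioc (-(n : ℝ)) n) := by
    apply Monotone.directed_le
    intro a b hab
    have : (a : ℝ) ≤ b := by exact_mod_cast hab
    exact Ioc_subset_Ioc (by linarith) this
  rw [← setLIntegral_univ, ← hU, setLIntegral_iUnion_of_directed _ hdir]
  refine iSup_le fun n => ?_
  have hn : (-(n : ℝ)) ≤ n := by have : (0 : ℝ) ≤ n := Nat.cast_nonneg n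
                                 linarith
  have hcont : ContinuousOn H (Icc (-(n : ℝ)) n) := fun x _ => (hd x).continuousAt.continuousWithinAt
  have hint : IntegrableOn h (Ioc (-(n : ℝ)) n) :=
    intervalIntegral.integrableOn_deriv_of_nonneg hcont (fun y _ => hd y) (fun y _ => h0 y)
  rw [← ofReal_integral_eq_lintegral_ofReal hint (Eventually.of_forall h0)]
  apply ENNReal.ofReal_le_ofReal
  rw [← intervalIntegral.integral_of_le hn,
    intervalIntegral.integral_eq_sub_of_hasDerivAt (fun y _ => hd y)
      ((intervalIntegrable_iff_integrableOn_Ioc_of_le hn).mpr hint)]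
  have h1 := abs_le.mp (hM n)
  have h2 := abs_le.mp (hM (-(n : ℝ)))
  linarith [h1.2, h2.1]

theorem aux_eLp (g H h : ℝ → ℝ) (A M q : ℝ) (hq : 1 ≤ q) (hd : ∀ x, HasDerivAt H (h x) x)
    (hM : ∀ x, |H x| ≤ M) (hgA : ∀ x, |g x| ≤ A) (hgh : ∀ x, |g x| ≤ h x) :
    eLpNorm g (ENNReal.ofReal q) volume ≤ ENNReal.ofReal (A ^ (1 - 1/q) * (2 * M) ^ (1/q)) := by
  have hq0 : 0 < q := by linarith
  have hA : 0 ≤ A := (abs_nonneg _).trans (hgA 0)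
  have hM0 : 0 ≤ M := (abs_nonneg _).trans (hM 0)
  have hl := aux_lintegral H h M hd (fun x => (abs_nonneg _).trans (hgh x)) hM
  rw [eLpNorm_eq_lintegral_rpow_enorm_toReal (by simpa using hq0) ENNReal.ofReal_ne_top,
    ENNReal.toReal_ofReal hq0.le]
  have hb : ∫⁻ x, ‖g x‖ₑ ^ q ≤ ENNReal.ofReal (A ^ (q - 1) * (2 * M)) := by
    calc ∫⁻ x, ‖g x‖ₑ ^ q ≤ ∫⁻ x, ENNReal.ofReal (A ^ (q - 1)) * ENNReal.ofReal (h x) := by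
          apply lintegral_mono
          intro x
          dsimp only
          rw [← ofReal_norm, ENNReal.ofReal_rpow_of_nonneg (norm_nonneg _) hq0.le,
            ← ENNReal.ofReal_mul (by positivity)]
          apply ENNReal.ofReal_le_ofReal
          rw [Real.norm_eq_abs]
          have e : |g x| ^ q = |g x| ^ (q - 1) * |g x| := by
            rcases (abs_nonneg (g x)).eq_or_lt with h | h
            · rw [← h, Real.zero_rpow hq0.ne']; simp
            · rw [← Real.rpow_add_one h.ne']; ring_nf
          rw [e]
          exact mul_le_mul (Real.rpow_le_rpow (abs_nonneg _) (hgA x) (by linarith)) (hgh x)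
            (abs_nonneg _) (by positivity)
      _ = ENNReal.ofReal (A ^ (q - 1)) * ∫⁻ x, ENNReal.ofReal (h x) :=
          lintegral_const_mul' _ _ ENNReal.ofReal_ne_top
      _ ≤ ENNReal.ofReal (A ^ (q - 1)) * ENNReal.ofReal (2 * M) := by gcongr
      _ = _ := (ENNReal.ofReal_mul (by positivity)).symm
  calc _ ≤ (ENNReal.ofReal (A ^ (q - 1) * (2 * M))) ^ (1 / q) :=
        ENNReal.rpow_le_rpow hb (by positivity)
    _ = ENNReal.ofReal ((A ^ (q - 1) * (2 * M)) ^ (1/q)) :=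
        ENNReal.ofReal_rpow_of_nonneg (by positivity) (by positivity)
    _ = _ := by
        rw [Real.mul_rpow (by positivity) (by positivity), ← Real.rpow_mul hA]
        congr 3
        field_simp

theorem aux_inv (φ g : ℝ → ℝ) (s : Set ℝ) (c d v : ℝ) (hc : 0 < c)
    (hφ : ∀ a ∈ s, ∀ b ∈ s, a ≤ b → c * (b - a) ≤ φ b - φ a)
    (hg : ∀ᶠ y in nhds v, g y ∈ s ∧ φ (g y) = y) (hd : HasDerivAt φ d (g v)) (hd0 : d ≠ 0) :
    HasDerivAt g d⁻¹ v := by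
  refine HasDerivAt.of_local_left_inverse ?_ hd hd0 (hg.mono fun y h => h.2)
  have hv := hg.self_of_nhds
  have hbd : ∀ᶠ y in nhds v, dist (g y) (g v) ≤ c⁻¹ * dist y v := by
    filter_upwards [hg] with y hy
    rw [Real.dist_eq, Real.dist_eq, inv_mul_eq_div, le_div_iff₀ hc]
    rcases le_total (g y) (g v) with h | h
    · have := hφ _ hy.1 _ hv.1 h
      rw [hy.2, hv.2] at this
      rw [abs_of_nonpos (by linarith)]
      have := neg_le_abs (y - v)
      linarith
    · have := hφ _ hv.1 _ hy.1 h
      rw [hy.2, hv.2] at this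
      rw [abs_of_nonneg (by linarith)]
      have := le_abs_self (y - v)
      linarith
  have hlim : Tendsto (fun y => c⁻¹ * dist y v) (nhds v) (nhds 0) := by
    have : Continuous (fun y : ℝ => c⁻¹ * dist y v) := by fun_prop
    simpa using this.tendsto v
  exact tendsto_iff_dist_tendsto_zero.mpr
    (squeeze_zero' (Eventually.of_forall fun _ => dist_nonneg) hbd hlim)

theorem aux_tanh (x : ℝ) : HasDerivAt Real.tanh (1 - Real.tanh x ^ 2) x := by
  have h := (Real.hasDerivAt_sinh x).div (Real.hasDerivAt_cosh x) (Real.cosh_pos x).ne'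
  have e : Real.tanh = Real.sinh / Real.cosh := by
    funext y; simp [Real.tanh_eq_sinh_div_cosh]
  rw [e]
  have hc := (Real.cosh_pos x).ne'
  refine h.congr_deriv ?_
  simp only [Pi.div_apply]
  field_simp

/-- Core calculus facts for the solution at a fixed time. -/
theorem aux_s (a b t : ℝ) (ha : 0 < a) (ht : 0 ≤ t) (Y : ℝ → ℝ)
    (hY : ∀ x, Y x + t * (b + a * Real.tanh (Y x)) = x) (x : ℝ) :
    HasDerivAt (fun x => Real.tanh (Y x))
      ((1 - Real.tanh (Y x) ^ 2) / (1 + t * a * (1 - Real.tanh (Y x) ^ 2))) x := by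
  have hr : ∀ y, 0 ≤ 1 - Real.tanh y ^ 2 := fun y => by linarith [Real.tanh_sq_lt_one y]
  have hmono : Monotone Real.tanh :=
    monotone_of_hasDerivAt_nonneg aux_tanh hr
  have hpos : ∀ y, 0 < 1 + t * (a * (1 - Real.tanh y ^ 2)) := fun y => by
    have := mul_nonneg ht (mul_nonneg ha.le (hr y)); linarith
  have hYd : HasDerivAt Y (1 + t * (a * (1 - Real.tanh (Y x) ^ 2)))⁻¹ x := by
    refine aux_inv (fun y => y + t * (b + a * Real.tanh y)) Y univ 1 _ x one_pos ?_
      (Eventually.of_forall fun y => ⟨mem_univ _, hY y⟩) ?_ (hpos _).ne'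
    · intro p _ q _ hpq
      have := mul_nonneg ht (mul_nonneg ha.le (sub_nonneg.mpr (hmono hpq)))
      nlinarith
    · exact (hasDerivAt_id _).add ((((aux_tanh _).const_mul a).const_add b).const_mul t)
  refine ((aux_tanh (Y x)).comp x hYd).congr_deriv ?_
  rw [div_eq_mul_inv, mul_assoc t]

theorem aux_core (a k c D : ℝ) (ha : 0 < a) (hk : 0 ≤ k) (hc : 0 < c) (hD : 0 ≤ D)
    (s U F2 F3 : ℝ → ℝ) (hs : ∀ x, |s x| < 1)
    (hsd : ∀ x, HasDerivAt s ((1 - s x ^ 2) / (1 + k * (1 - s x ^ 2))) x)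
    (hF : ∀ u, HasDerivAt F2 (F3 u) u)
    (hU : ∀ x, HasDerivAt U (a * ((1 - s x ^ 2) / (1 + k * (1 - s x ^ 2))) / F2 (U x)) x)
    (hF2 : ∀ x, c ≤ F2 (U x)) (hF3 : ∀ x, |F3 (U x)| ≤ D) :
    (∀ x, |deriv U x| ≤ a / c * (1 / (1 + k))) ∧
    (∀ x, |deriv (deriv U) x| ≤ (4 * a / c + a ^ 2 * D / c ^ 3) * (1 / (1 + k))) ∧
    (∀ q : ℝ, 1 ≤ q → eLpNorm (deriv U) (ENNReal.ofReal q) volume ≤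
      ENNReal.ofReal ((a / c * (1 / (1 + k))) ^ (1 - 1/q) * (2 * (a / c)) ^ (1/q))) ∧
    (∀ q : ℝ, 1 ≤ q → eLpNorm (deriv (deriv U)) (ENNReal.ofReal q) volume ≤
      ENNReal.ofReal (((4 * a / c + a ^ 2 * D / c ^ 3) * (1 / (1 + k))) ^ (1 - 1/q) *
        (2 * ((4 * a / c + a ^ 2 * D / c ^ 3) * (1 / (1 + k)))) ^ (1/q))) := by
  set r : ℝ → ℝ := fun x => 1 - s x ^ 2 with hr
  set m : ℝ → ℝ := fun x => r x / (1 + k * r x) with hm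
  have hsd' : ∀ x, HasDerivAt s (m x) x := hsd
  have hU' : ∀ x, HasDerivAt U (a * m x / F2 (U x)) x := hU
  have hr0 : ∀ x, 0 < r x := fun x => by
    have := (sq_lt_one_iff_abs_lt_one (s x)).mpr (hs x)
    simp only [hr]; linarith
  have hr1 : ∀ x, r x ≤ 1 := fun x => by simp only [hr]; linarith [sq_nonneg (s x)]
  have hp : ∀ x, 1 ≤ 1 + k * r x := fun x => by
    have := mul_nonneg hk (hr0 x).le; linarith
  have hp0 : ∀ x, 0 < 1 + k * r x := fun x => by linarith [hp x]
  have hm0 : ∀ x, 0 < m x := fun x => div_pos (hr0 x) (hp0 x)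
  have hk1 : 0 < 1 + k := by linarith
  have hm1 : ∀ x, m x ≤ 1 / (1 + k) := fun x => by
    simp only [hm]
    rw [div_le_div_iff₀ (hp0 x) hk1]
    nlinarith [hr1 x]
  have hF20 : ∀ x, 0 < F2 (U x) := fun x => hc.trans_le (hF2 x)
  have hdU : deriv U = fun x => a * m x / F2 (U x) := funext fun x => (hU' x).deriv
  have hrd : ∀ x, HasDerivAt r (-(2 * s x * m x)) x := fun x => by
    refine (((hsd' x).pow 2).const_sub 1).congr_deriv ?_
    simp
  have hmd : ∀ x, HasDerivAt m (-(2 * s x * m x) / (1 + k * r x) ^ 2) x := fun x => by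
    refine ((hrd x).div (((hrd x).const_mul k).const_add 1) (hp0 x).ne').congr_deriv ?_
    congr 1; ring
  have hddU : ∀ x, deriv (deriv U) x = a * (-(2 * s x * m x) / (1 + k * r x) ^ 2) / F2 (U x)
      - (a * m x) ^ 2 * F3 (U x) / F2 (U x) ^ 3 := fun x => by
    rw [hdU]
    have h := (((hmd x).const_mul a).div ((hF (U x)).comp x (hU' x)) (hF20 x).ne').deriv
    refine Eq.trans h ?_
    have := (hF20 x).ne'
    simp only [Function.comp_apply]
    field_simp
  have b1 : ∀ x, |deriv U x| ≤ a / c * m x := fun x => by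
    rw [hdU]
    dsimp only
    have h1 : 0 ≤ a * m x := by have := hm0 x; positivity
    rw [abs_of_nonneg (div_nonneg h1 (hF20 x).le), div_mul_eq_mul_div]
    exact div_le_div_of_nonneg_left h1 hc (hF2 x)
  have b2 : ∀ x, |deriv (deriv U) x| ≤ 2 * a / c * (m x / (1 + k * r x) ^ 2)
      + a ^ 2 * D / c ^ 3 * m x ^ 2 := fun x => by
    rw [hddU]
    refine (abs_sub _ _).trans (add_le_add ?_ ?_)
    · rw [abs_div, abs_mul, abs_div, abs_neg, abs_mul, abs_mul, abs_of_pos ha,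
        abs_of_pos (hF20 x), abs_of_pos (hm0 x), abs_of_pos (pow_pos (hp0 x) 2), abs_two]
      have h1 : a * (2 * |s x| * m x / (1 + k * r x) ^ 2)
          ≤ 2 * a * (m x / (1 + k * r x) ^ 2) := by
        have h2 : 0 ≤ m x / (1 + k * r x) ^ 2 := div_nonneg (hm0 x).le (pow_pos (hp0 x) 2).le
        have h3 : a * (2 * |s x| * m x / (1 + k * r x) ^ 2)
          = |s x| * (2 * a * (m x / (1 + k * r x) ^ 2)) := by ring
        rw [h3]
        exact mul_le_of_le_one_left (by positivity) (hs x).le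
      have h2 : 0 ≤ 2 * a * (m x / (1 + k * r x) ^ 2) := by
        have := hm0 x; have := hp0 x; positivity
      calc _ ≤ 2 * a * (m x / (1 + k * r x) ^ 2) / F2 (U x) :=
            div_le_div_of_nonneg_right h1 (hF20 x).le
        _ ≤ 2 * a * (m x / (1 + k * r x) ^ 2) / c := div_le_div_of_nonneg_left h2 hc (hF2 x)
        _ = _ := by ring
    · rw [abs_div, abs_mul, abs_of_nonneg (sq_nonneg _), abs_of_pos (pow_pos (hF20 x) 3)]
      calc _ ≤ (a * m x) ^ 2 * D / c ^ 3 := by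
            have := hF2 x; have := hF3 x
            gcongr
        _ = _ := by ring
  have b3 : ∀ x, m x ^ 2 ≤ 1 / (1 + k) * m x := fun x => by
    have := hm0 x; have := hm1 x; nlinarith
  have hcD : 0 ≤ a ^ 2 * D / c ^ 3 := by positivity
  have hac : 0 < a / c := by positivity
  have hac2 : 0 < 2 * a / c := by positivity
  have hi0 : 0 < 1 / (1 + k) := by positivity
  have c1 : ∀ x, |deriv U x| ≤ a / c * (1 / (1 + k)) := fun x =>
    (b1 x).trans (mul_le_mul_of_nonneg_left (hm1 x) hac.le)
  have e4 : 4 * a / c = 2 * a / c + 2 * a / c := by ring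
  have c2 : ∀ x, |deriv (deriv U) x| ≤ (4 * a / c + a ^ 2 * D / c ^ 3) * (1 / (1 + k)) := fun x => by
    refine (b2 x).trans ?_
    have h1 : m x / (1 + k * r x) ^ 2 ≤ 1 / (1 + k) :=
      (div_le_self (hm0 x).le (one_le_pow₀ (hp x))).trans (hm1 x)
    have h2 : m x ^ 2 ≤ 1 / (1 + k) := by
      have : 1 / (1 + k) ≤ 1 := by rw [div_le_one hk1]; linarith
      nlinarith [hm0 x, hm1 x]
    have h3 := mul_le_mul_of_nonneg_left h1 hac2.le
    have h4 := mul_le_mul_of_nonneg_left h2 hcD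
    have h5 := mul_pos hac2 hi0
    rw [e4]
    linarith
  refine ⟨c1, c2, fun q hq => ?_, fun q hq => ?_⟩
  · refine aux_eLp (deriv U) (fun x => a / c * s x) (fun x => a / c * m x) _ _ q hq
      (fun x => (hsd' x).const_mul _) (fun x => ?_) c1 b1
    rw [abs_mul, abs_of_pos hac]
    exact mul_le_of_le_one_right hac.le (hs x).le
  · have hs' : ∀ x, 0 < 1 + s x ∧ 0 < 1 - s x := fun x => by
      have := abs_lt.mp (hs x); constructor <;> linarith
    have hq1 : ∀ x, 0 < 1 + k * (1 + s x) := fun x => by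
      have := mul_nonneg hk (hs' x).1.le; linarith
    have hq2 : ∀ x, 0 < 1 + k * (1 - s x) := fun x => by
      have := mul_nonneg hk (hs' x).2.le; linarith
    refine aux_eLp _
      (fun x => 2 * a / c * ((1 + s x) / (1 + k * (1 + s x)) - (1 - s x) / (1 + k * (1 - s x)))
        + a ^ 2 * D / c ^ 3 * (1 / (1 + k)) * s x)
      (fun x => 2 * a / c * (m x / (1 + k * (1 + s x)) ^ 2 + m x / (1 + k * (1 - s x)) ^ 2)
        + a ^ 2 * D / c ^ 3 * (1 / (1 + k)) * m x) _ _ q hq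
      (fun x => ?_) (fun x => ?_) c2 (fun x => (b2 x).trans ?_)
    · refine HasDerivAt.add (HasDerivAt.const_mul _ ?_) ((hsd' x).const_mul _)
      have hA := (hsd' x).const_add 1
      have hB := (hsd' x).const_sub 1
      refine ((hA.div ((hA.const_mul k).const_add 1) (hq1 x).ne').sub
        (hB.div ((hB.const_mul k).const_add 1) (hq2 x).ne')).congr_deriv ?_
      have h1 := (hq1 x).ne'
      have h2 := (hq2 x).ne'
      rw [sub_eq_add_neg, ← neg_div]
      congr 2 <;> ring
    · have hbd : ∀ z : ℝ, 0 < z → z ≤ 2 → 0 ≤ z / (1 + k * z) ∧ z / (1 + k * z) ≤ 2 * (1 / (1 + k)) := by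
        intro z hz hz2
        have hz1 : 0 < 1 + k * z := by have := mul_nonneg hk hz.le; linarith
        refine ⟨by positivity, ?_⟩
        rw [mul_one_div, div_le_div_iff₀ hz1 hk1]
        nlinarith [mul_nonneg hk hz.le]
      have h1 := hbd _ (hs' x).1 (by linarith [(hs' x).2])
      have h2 := hbd _ (hs' x).2 (by linarith [(hs' x).1])
      have h3 : |(1 + s x) / (1 + k * (1 + s x)) - (1 - s x) / (1 + k * (1 - s x))|
          ≤ 2 * (1 / (1 + k)) := by
        rw [abs_le]; constructor <;> linarith [h1.1, h1.2, h2.1, h2.2]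
      refine (abs_add_le _ _).trans ?_
      rw [abs_mul (2 * a / c), abs_of_pos hac2, abs_mul _ (s x),
        abs_of_nonneg (mul_nonneg hcD hi0.le)]
      have h4 := mul_le_mul_of_nonneg_left h3 hac2.le
      have h5 := mul_le_of_le_one_right (mul_nonneg hcD hi0.le) (hs x).le
      rw [e4]
      linarith
    · refine add_le_add (mul_le_mul_of_nonneg_left ?_ hac2.le) ?_
      · have hA : 0 ≤ m x / (1 + k * (1 + s x)) ^ 2 := div_nonneg (hm0 x).le (sq_nonneg _)
        have hB : 0 ≤ m x / (1 + k * (1 - s x)) ^ 2 := div_nonneg (hm0 x).le (sq_nonneg _)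
        rcases le_total 0 (s x) with h | h
        · refine le_add_of_nonneg_of_le hA (div_le_div_of_nonneg_left (hm0 x).le
            (pow_pos (hq2 x) 2) (pow_le_pow_left₀ (hq2 x).le ?_ 2))
          have : 1 - s x ≤ r x := by simp only [hr]; nlinarith [hs' x]
          have := mul_le_mul_of_nonneg_left this hk
          linarith
        · refine le_add_of_le_of_nonneg (div_le_div_of_nonneg_left (hm0 x).le
            (pow_pos (hq1 x) 2) (pow_le_pow_left₀ (hq1 x).le ?_ 2)) hB
          have : 1 + s x ≤ r x := by simp only [hr]; nlinarith [hs' x]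
          have := mul_le_mul_of_nonneg_left this hk
          linarith
      · rw [mul_assoc]
        exact mul_le_mul_of_nonneg_left (b3 x) hcD

theorem stmt_5 (um up : ℝ) (hu : um < up)
    (f : ℝ → ℝ) (hf : ContDiff ℝ 3 f)
    (hconv : ∀ u ∈ Set.Icc um up, 0 < deriv (deriv f) u)
    (linv : ℝ → ℝ) (hlinv : ∀ u ∈ Set.Icc um up, linv (deriv f u) = u)
    (Y : ℝ → ℝ → ℝ)
    (hY : ∀ t x : ℝ, 0 ≤ t → Y t x + t * w0 (deriv f um) (deriv f up) (Y t x) = x) :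
    let Ur : ℝ → ℝ → ℝ := fun t x => linv (w0 (deriv f um) (deriv f up) (Y t x))
    (∀ q : ℝ, 1 ≤ q → ∃ C : ℝ, 0 < C ∧ ∀ t : ℝ, 0 ≤ t →
      eLpNorm (fun x => deriv (fun y => Ur t y) x) (ENNReal.ofReal q) volume
        ≤ ENNReal.ofReal (C * (1 + t) ^ (-1 + 1/q)) ∧
      eLpNorm (fun x => deriv (deriv (fun y => Ur t y)) x) (ENNReal.ofReal q) volume
        ≤ ENNReal.ofReal (C * (1 + t) ^ (-(1:ℝ)))) ∧
    (∃ C : ℝ, 0 < C ∧ ∀ t : ℝ, 0 ≤ t → ∀ x : ℝ,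
      |deriv (fun y => Ur t y) x| ≤ C * (1 + t) ^ (-(1:ℝ)) ∧
      |deriv (deriv (fun y => Ur t y)) x| ≤ C * (1 + t) ^ (-(1:ℝ))) := by
  intro Ur
  have hd1 : ContDiff ℝ 2 (deriv f) := by
    have : ContDiff ℝ (2 + 1) f := by norm_num; exact hf
    exact (contDiff_succ_iff_deriv.mp this).2.2
  have hd2 : ContDiff ℝ 1 (deriv (deriv f)) := by
    have : ContDiff ℝ (1 + 1) (deriv f) := by norm_num; exact hd1
    exact (contDiff_succ_iff_deriv.mp this).2.2
  have hF1 : ∀ u, HasDerivAt (deriv f) (deriv (deriv f) u) u := fun u =>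
    (hd1.differentiable (by norm_num) u).hasDerivAt
  have hF : ∀ u, HasDerivAt (deriv (deriv f)) (deriv (deriv (deriv f)) u) u := fun u =>
    (hd2.differentiable (by norm_num) u).hasDerivAt
  have hF3c : Continuous (deriv (deriv (deriv f))) := hd2.continuous_deriv le_rfl
  have hne : (Icc um up).Nonempty := ⟨um, le_rfl, hu.le⟩
  obtain ⟨u0, hu0, hmin⟩ := isCompact_Icc.exists_isMinOn hne hd2.continuous.continuousOn
  set c := deriv (deriv f) u0 with hcdef
  have hc : 0 < c := hconv u0 hu0
  have hcle : ∀ u ∈ Icc um up, c ≤ deriv (deriv f) u := fun u h => hmin h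
  obtain ⟨D, hDb⟩ := isCompact_Icc.exists_bound_of_continuousOn (s := Icc um up) hF3c.continuousOn
  have hD : 0 ≤ D := (norm_nonneg _).trans (hDb um ⟨le_rfl, hu.le⟩)
  have hlow : ∀ x ∈ Icc um up, ∀ y ∈ Icc um up, x ≤ y → c * (y - x) ≤ deriv f y - deriv f x :=
    (convex_Icc um up).mul_sub_le_image_sub_of_le_deriv hd1.continuous.continuousOn
      (fun x _ => (hF1 x).differentiableAt.differentiableWithinAt)
      (fun x hx => hcle x (interior_subset hx))
  have hlinv2 : ∀ v ∈ Icc (deriv f um) (deriv f up), linv v ∈ Icc um up ∧ deriv f (linv v) = v := by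
    intro v hv
    obtain ⟨u, hu1, rfl⟩ := intermediate_value_Icc hu.le hd1.continuous.continuousOn hv
    rw [hlinv u hu1]
    exact ⟨hu1, rfl⟩
  have hlam : deriv f um < deriv f up := by
    have := hlow um ⟨le_rfl, hu.le⟩ up ⟨hu.le, le_rfl⟩ hu.le
    have := mul_pos hc (sub_pos.mpr hu)
    linarith
  set wm := deriv f um with hwm
  set wp := deriv f up with hwp
  have hlinvd : ∀ v ∈ Ioo wm wp, HasDerivAt linv (deriv (deriv f) (linv v))⁻¹ v := by
    intro v hv
    refine aux_inv (deriv f) linv (Icc um up) c _ v hc hlow ?_ (hF1 _) ?_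
    · filter_upwards [isOpen_Ioo.mem_nhds hv] with y hy
      exact hlinv2 y (Ioo_subset_Icc_self hy)
    · exact (hconv _ (hlinv2 v (Ioo_subset_Icc_self hv)).1).ne'
  set a := (wp - wm) / 2 with hadef
  have ha : 0 < a := by rw [hadef]; linarith
  have hw : ∀ y, w0 wm wp y ∈ Ioo wm wp := by
    intro y
    have h1 := Real.tanh_lt_one y
    have h2 := Real.neg_one_lt_tanh y
    simp only [w0, ← hadef]
    have : (wm + wp) / 2 = wm + a := by rw [hadef]; ring
    have : (wm + wp) / 2 = wp - a := by rw [hadef]; ring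
    constructor <;> nlinarith
  have core : ∀ t : ℝ, 0 ≤ t → _ := fun t ht =>
    aux_core a (t * a) c D ha (mul_nonneg ht ha.le) hc hD (fun x => Real.tanh (Y t x)) (Ur t)
      (deriv (deriv f)) (deriv (deriv (deriv f))) (fun x => Real.abs_tanh_lt_one _)
      (aux_s a ((wm + wp) / 2) t ha ht (Y t) (fun x => hY t x ht)) hF
      (fun x => by
        have h1 := aux_s a ((wm + wp) / 2) t ha ht (Y t) (fun x => hY t x ht) x
        have h2 := (hlinvd _ (hw (Y t x))).comp x ((h1.const_mul a).const_add ((wm + wp) / 2))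
        refine h2.congr_deriv ?_
        exact (div_eq_inv_mul _ _).symm)
      (fun x => hcle _ (hlinv2 _ (Ioo_subset_Icc_self (hw _))).1)
      (fun x => hDb _ (hlinv2 _ (Ioo_subset_Icc_self (hw _))).1)
  -- a common constant
  set B := 4 * a / c + a ^ 2 * D / c ^ 3 with hB
  have hac : 0 < a / c := by positivity
  have hB0 : a / c ≤ B := by
    have : 0 ≤ a ^ 2 * D / c ^ 3 := by positivity
    have e : 4 * a / c = 4 * (a / c) := by ring
    rw [hB, e]; linarith
  have hBp : 0 < B := hac.trans_le hB0
  set K := 2 * B * (1 + 1 / a) with hK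
  have h1a : 1 ≤ 1 + 1 / a := by have : 0 < 1 / a := by positivity
                                 linarith
  have hKp : 0 < K := by positivity
  have hKB : 2 * B ≤ K := by rw [hK]; nlinarith
  have hi : ∀ t : ℝ, 0 ≤ t → 2 * B * (1 / (1 + t * a)) ≤ K * (1 + t)⁻¹ := by
    intro t ht
    have h1 : 0 < 1 + t * a := by positivity
    have h2 : 0 < 1 + t := by positivity
    have : 1 / (1 + t * a) ≤ (1 + 1 / a) * (1 + t)⁻¹ := by
      rw [← div_eq_mul_inv, div_le_div_iff₀ h1 h2]
      have e : (1 + 1 / a) * (1 + t * a) = 1 + t * a + 1 / a + t := by field_simp; ring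
      have : 0 < 1 / a := by positivity
      rw [e]
      nlinarith [mul_nonneg ht ha.le]
    rw [hK, mul_assoc (2 * B)]
    exact mul_le_mul_of_nonneg_left this (by positivity)
  refine ⟨fun q hq => ⟨K, hKp, fun t ht => ?_⟩, K, hKp, fun t ht x => ?_⟩
  · obtain ⟨-, -, h3, h4⟩ := core t ht
    have hq0 : 0 < q := by linarith
    have hq1 : 0 ≤ 1 - 1 / q := by
      rw [sub_nonneg, div_le_one hq0]; exact hq
    have hqi : 0 ≤ 1 / q := by positivity
    have h1 : 0 < 1 / (1 + t * a) := by positivity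
    have hT : 0 < (1 + t)⁻¹ := by positivity
    have hTn : 0 < 1 + t := by positivity
    have hit := hi t ht
    have hBi : 0 < B * (1 / (1 + t * a)) := by positivity
    have hsplit : ∀ z : ℝ, 0 < z → z ^ (1 - 1 / q) * z ^ (1 / q) = z := fun z hz => by
      rw [← Real.rpow_add hz]; simp
    refine ⟨(h3 q hq).trans (ENNReal.ofReal_le_ofReal ?_), (h4 q hq).trans (ENNReal.ofReal_le_ofReal ?_)⟩
    · calc _ ≤ (K * (1 + t)⁻¹) ^ (1 - 1 / q) * K ^ (1 / q) := by
            apply mul_le_mul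
            · apply Real.rpow_le_rpow (by positivity) _ hq1
              have := mul_le_mul_of_nonneg_right hB0 h1.le
              linarith
            · exact Real.rpow_le_rpow (by positivity) (by linarith) hqi
            · positivity
            · positivity
        _ = K ^ (1 - 1 / q) * K ^ (1 / q) * (1 + t) ^ (-1 + 1 / q) := by
            rw [Real.mul_rpow hKp.le hT.le, Real.inv_rpow hTn.le, ← Real.rpow_neg hTn.le]
            ring_nf
        _ = _ := by rw [hsplit K hKp]
    · calc _ ≤ (K * (1 + t)⁻¹) ^ (1 - 1 / q) * (K * (1 + t)⁻¹) ^ (1 / q) := by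
            apply mul_le_mul
            · exact Real.rpow_le_rpow (by positivity) (by linarith) hq1
            · exact Real.rpow_le_rpow (by positivity) (by linarith) hqi
            · positivity
            · positivity
        _ = _ := by rw [hsplit _ (by positivity), Real.rpow_neg_one]
  · obtain ⟨h3, h4, -, -⟩ := core t ht
    have h1 : 0 < 1 / (1 + t * a) := by positivity
    have hBi : 0 < B * (1 / (1 + t * a)) := by positivity
    have hit := hi t ht
    rw [Real.rpow_neg_one]
    refine ⟨(h3 x).trans ?_, (h4 x).trans ?_⟩
    · have := mul_le_mul_of_nonneg_right hB0 h1.le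
      linarith
    · linarith
end

section
/- For each t ≥ 0 there exists a unique real number X(t) such that U(t,X(t)) + U^r(t,X(t)) = 0. Moreover, there exist T₀ > 0 and a positive constant C (depending on p, μ, f, u₋, u₊) such that for all t ≥ T₀: |√(A/B) − X(t)·(1+t)^{−1/(p+1)}| ≤ C·(1+t)^{−(p−1)/(p+1)}. -/
open Real MeasureTheory Filter Set

/-- The Barenblatt-type profile `v(t,x) = t^{-1/(p+1)} (max(A - B(x t^{-1/(p+1)})², 0))^{1/(p-1)}`,
the spatial derivative of the contact wave for `p`-Laplacian type viscosity. -/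
noncomputable def vfun (p A B t x : ℝ) : ℝ :=
  t ^ (-(1:ℝ)/(p+1)) * (max (A - B * (x * t ^ (-(1:ℝ)/(p+1)))^2) 0) ^ ((1:ℝ)/(p-1))


lemma w0_eq (L y : ℝ) : w0 0 L y = L / (1 + Real.exp (-(2*y))) := by
  unfold w0
  rw [Real.tanh_eq_sinh_div_cosh, Real.sinh_eq, Real.cosh_eq]
  have h1 : Real.exp (-(2*y)) = Real.exp (-y) * Real.exp (-y) := by
    rw [← Real.exp_add]; ring_nf
  have h2 : Real.exp y * Real.exp (-y) = 1 := by
    rw [← Real.exp_add]; simp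
  have h3 := Real.exp_pos y
  have h4 := Real.exp_pos (-y)
  rw [h1]
  have h5 : (0:ℝ) < 1 + Real.exp (-y) * Real.exp (-y) := by positivity
  have h6 : (0:ℝ) < Real.exp y + Real.exp (-y) := by positivity
  field_simp
  linear_combination L * (2 * Real.exp (-y)) * h2

lemma linv_facts (up : ℝ) (hup : 0 < up)
    (f : ℝ → ℝ) (hf1 : ContDiff ℝ 1 f) (hf3 : ContDiffOn ℝ 3 f (Set.Ici 0))
    (hfzero : ∀ u : ℝ, u ≤ 0 → f u = 0)
    (hconv : ∀ u : ℝ, 0 ≤ u →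
      0 < derivWithin (derivWithin f (Set.Ici 0)) (Set.Ici 0) u)
    (linv : ℝ → ℝ) (hlinv : ∀ u ∈ Set.Icc (0:ℝ) up, linv (deriv f u) = u) :
    0 < deriv f up ∧ linv 0 = 0 ∧ ∃ c : ℝ, 0 < c ∧
      ∀ a ∈ Icc 0 (deriv f up), ∀ b ∈ Icc 0 (deriv f up), a ≤ b →
        c * (linv b - linv a) ≤ b - a ∧ (a < b → linv a < linv b) := by
  have hd : Differentiable ℝ f := hf1.differentiable (by norm_num)
  have hud : UniqueDiffOn ℝ (Ici (0:ℝ)) := uniqueDiffOn_Ici 0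
  have heq : ∀ u, 0 ≤ u → derivWithin f (Ici 0) u = deriv f u := fun u hu =>
    (hd u).derivWithin (hud u hu)
  have h0 : deriv f 0 = 0 := by
    rw [← (hd 0).derivWithin (uniqueDiffOn_Iic (0:ℝ) 0 (mem_Iic.2 le_rfl))]
    rw [derivWithin_congr (s := Iic 0) (f := fun _ => (0:ℝ)) (fun x hx => hfzero x hx) (hfzero 0 le_rfl)]
    simp
  set l := derivWithin f (Ici 0) with hl
  have hl2 : ContDiffOn ℝ 2 l (Ici 0) := hf3.derivWithin hud (by norm_num)
  have hl1 : ContinuousOn (derivWithin l (Ici 0)) (Ici 0) :=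
    hl2.continuousOn_derivWithin hud (by norm_num)
  have hsub : Icc 0 up ⊆ Ici (0:ℝ) := fun x hx => hx.1
  obtain ⟨m, hm, hmin⟩ := isCompact_Icc.exists_isMinOn (nonempty_Icc.2 hup.le) (hl1.mono hsub)
  set c := derivWithin l (Ici 0) m with hc
  have hcpos : 0 < c := hconv m hm.1
  have hgrow : ∀ x ∈ Icc 0 up, ∀ y ∈ Icc 0 up, x ≤ y → c * (y - x) ≤ l y - l x := by
    apply (convex_Icc 0 up).mul_sub_le_image_sub_of_le_deriv (hl2.continuousOn.mono hsub)
    · intro x hx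
      rw [interior_Icc] at hx
      have := (hl2.differentiableOn (by norm_num)) x hx.1.le
      exact (this.differentiableAt (Ici_mem_nhds hx.1)).differentiableWithinAt
    · intro x hx
      rw [interior_Icc] at hx
      rw [← derivWithin_of_mem_nhds (Ici_mem_nhds hx.1)]
      exact hmin ⟨hx.1.le, hx.2.le⟩
  have hlup : l up = deriv f up := heq up hup.le
  have hl0 : l 0 = 0 := by rw [heq 0 le_rfl, h0]
  have hsurj : ∀ a ∈ Icc 0 (deriv f up), linv a ∈ Icc 0 up ∧ l (linv a) = a := by
    intro a ha
    have := intermediate_value_Icc hup.le (hl2.continuousOn.mono hsub)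
    rw [hl0, hlup] at this
    obtain ⟨u, hu, rfl⟩ := this ha
    rw [heq u hu.1, hlinv u hu]
    exact ⟨hu, heq u hu.1⟩
  refine ⟨?_, ?_, c, hcpos, ?_⟩
  · have := hgrow 0 ⟨le_rfl, hup.le⟩ up ⟨hup.le, le_rfl⟩ hup.le
    rw [hlup, hl0] at this
    have h2 := mul_pos hcpos hup
    linarith
  · have := hlinv 0 ⟨le_rfl, hup.le⟩
    rwa [h0] at this
  · intro a ha b hb hab
    obtain ⟨h1, h2⟩ := hsurj a ha
    obtain ⟨h3, h4⟩ := hsurj b hb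
    have hlt : a < b → linv a < linv b := by
      intro h
      by_contra hcon
      push Not at hcon
      have := hgrow _ h3 _ h1 hcon
      rw [h2, h4] at this
      have := mul_nonneg hcpos.le (sub_nonneg.2 hcon)
      linarith
    refine ⟨?_, hlt⟩
    have hle : linv a ≤ linv b := by
      rcases hab.eq_or_lt with h | h
      · rw [h]
      · exact (hlt h).le
    have := hgrow _ h1 _ h3 hle
    rwa [h2, h4] at this


noncomputable def gfun (q A B z : ℝ) : ℝ := (max (A - B * z^2) 0) ^ q

lemma gfun_cont (q A B : ℝ) (hq : 0 < q) : Continuous (gfun q A B) := by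
  unfold gfun
  exact Continuous.rpow_const (by fun_prop) (fun _ => Or.inr hq.le)

lemma gfun_nonneg (q A B z : ℝ) : 0 ≤ gfun q A B z := by
  unfold gfun
  positivity

lemma gfun_zero (q A B z : ℝ) (hq : 0 < q) (hA : 0 < A) (hB : 0 < B) (hz : √(A/B) ≤ |z|) :
    gfun q A B z = 0 := by
  unfold gfun
  have h : A / B ≤ z^2 := by
    rw [← sq_abs]
    exact (Real.sqrt_le_left (abs_nonneg z)).1 hz
  rw [div_le_iff₀ hB] at h
  rw [max_eq_right (by linarith), Real.zero_rpow hq.ne']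

lemma gfun_int (q A B : ℝ) (hq : 0 < q) (hA : 0 < A) (hB : 0 < B) :
    ∫ z in (-√(A/B))..√(A/B), gfun q A B z =
      2 * (A^q * √(A/B) * ∫ θ in (0:ℝ)..(Real.pi/2), Real.sin θ ^ (2*q+1)) := by
  have hc := gfun_cont q A B hq
  have hii : ∀ a b, IntervalIntegrable (gfun q A B) volume a b :=
    fun a b => hc.intervalIntegrable a b
  set z0 := √(A/B) with hz0
  have hz0sq : z0^2 = A / B := Real.sq_sqrt (by positivity)
  have h1 : ∫ z in (-z0)..0, gfun q A B z = ∫ z in (0:ℝ)..z0, gfun q A B z := by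
    have := intervalIntegral.integral_comp_neg (a := 0) (b := z0) (gfun q A B)
    rw [neg_zero] at this
    rw [← this]
    congr 1; ext x
    simp [gfun]
  have h2 : ∫ z in (-z0)..0, gfun q A B z =
      A^q * z0 * ∫ θ in (0:ℝ)..(Real.pi/2), Real.sin θ ^ (2*q+1) := by
    have := intervalIntegral.integral_comp_mul_deriv (a := 0) (b := Real.pi/2)
      (f := fun θ => -z0 * Real.cos θ) (f' := fun θ => z0 * Real.sin θ) (g := gfun q A B)
      (fun x _ => by
        exact ((Real.hasDerivAt_cos x).const_mul (-z0)).congr_deriv (by ring)) (by fun_prop) hc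
    simp only [Real.cos_zero, Real.cos_pi_div_two, mul_one, mul_zero] at this
    rw [← this, ← intervalIntegral.integral_const_mul]
    apply intervalIntegral.integral_congr
    intro θ hθ
    rw [uIcc_of_le (by positivity)] at hθ
    have hs : 0 ≤ Real.sin θ :=
      Real.sin_nonneg_of_nonneg_of_le_pi hθ.1 (by linarith [hθ.2, Real.pi_pos])
    simp only [Function.comp, gfun]
    have e : A - B * (-z0 * Real.cos θ)^2 = A * (Real.sin θ)^2 := by
      have : (-z0 * Real.cos θ)^2 = z0^2 * (1 - Real.sin θ ^2) := by
        rw [← Real.cos_sq']; ring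
      rw [this, hz0sq]; field_simp; ring
    rw [e, max_eq_left (by positivity), Real.mul_rpow hA.le (by positivity),
      Real.rpow_add_of_nonneg hs (by positivity) (by norm_num), Real.rpow_one,
      Real.rpow_mul hs, Real.rpow_two]
    ring
  rw [← intervalIntegral.integral_add_adjacent_intervals (hii (-z0) 0) (hii 0 z0), ← h1, h2]
  ring

lemma gfun_lower (q A B z : ℝ) (hq : 0 < q) (hA : 0 < A) (hB : 0 < B) (h0 : 0 ≤ z)
    (hz : z ≤ √(A/B)) :
    ((B * √(A/B) / 2)^q / 2) * (√(A/B) - z)^(q+1) ≤ ∫ y in z..√(A/B), gfun q A B y := by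
  have hc := gfun_cont q A B hq
  have hii : ∀ a b, IntervalIntegrable (gfun q A B) volume a b :=
    fun a b => hc.intervalIntegrable a b
  set z0 := √(A/B) with hz0
  have hz0sq : z0^2 = A / B := Real.sq_sqrt (by positivity)
  have hz0p : 0 < z0 := Real.sqrt_pos.2 (by positivity)
  have hBz : B * z0^2 = A := by rw [hz0sq]; field_simp
  rw [← intervalIntegral.integral_add_adjacent_intervals (hii z ((z+z0)/2)) (hii _ z0)]
  have h2 : 0 ≤ ∫ y in ((z+z0)/2)..z0, gfun q A B y :=
    intervalIntegral.integral_nonneg (by linarith) (fun _ _ => gfun_nonneg _ _ _ _)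
  have h1 : ∫ y in z..((z+z0)/2), (B * z0 / 2)^q * (z0 - z)^q ≤ ∫ y in z..((z+z0)/2), gfun q A B y := by
    apply intervalIntegral.integral_mono_on (by linarith) (by simp) (hii _ _)
    intro y hy
    rw [← Real.mul_rpow (by positivity) (by linarith)]
    unfold gfun
    apply Real.rpow_le_rpow (mul_nonneg (by positivity) (by linarith)) _ hq.le
    apply le_max_of_le_left
    have a1 : (z0 - z)/2 ≤ z0 - y := by linarith [hy.2]
    have a2 : z0 ≤ z0 + y := by linarith [hy.1]
    have a3 := mul_le_mul a2 a1 (by linarith) (by linarith)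
    have a4 := mul_le_mul_of_nonneg_left a3 hB.le
    have e : A - B * y^2 = B * ((z0 + y) * (z0 - y)) := by rw [← hBz]; ring
    rw [e]
    linarith
  rw [intervalIntegral.integral_const, smul_eq_mul] at h1
  have e : (z0 - z)^(q+1) = (z0-z)^q * (z0 - z) := by
    rw [Real.rpow_add_of_nonneg (by linarith) hq.le (by norm_num), Real.rpow_one]
  rw [e]
  have : ((z + z0) / 2 - z) * ((B * z0 / 2) ^ q * (z0 - z) ^ q) = (B * z0 / 2) ^ q / 2 * ((z0 - z) ^ q * (z0 - z)) := by ring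
  linarith

lemma vfun_int (p A B s x : ℝ) (hp : 1 < p) (hs : 0 < s) (hA : 0 < A) (hB : 0 < B) :
    ∫ y in Iio x, vfun p A B s y =
      (∫ z in (-√(A/B))..√(A/B), gfun (1/(p-1)) A B z) -
        ∫ z in (x * s ^ (-(1:ℝ)/(p+1)))..√(A/B), gfun (1/(p-1)) A B z := by
  have hq : 0 < 1/(p-1) := by
    have : 0 < p - 1 := by linarith
    positivity
  set q := 1/(p-1) with hqd
  set k := s ^ (-(1:ℝ)/(p+1)) with hk
  have hkp : 0 < k := Real.rpow_pos_of_pos hs _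
  have hc := gfun_cont q A B hq
  set z0 := √(A/B) with hz0
  have hz0p : 0 < z0 := Real.sqrt_pos.2 (by positivity)
  have hsupp : Function.support (gfun q A B) ⊆ Ioc (-z0) z0 := by
    intro y hy
    by_contra hcon
    apply hy
    apply gfun_zero q A B y hq hA hB
    by_contra h2
    push Not at h2
    rw [abs_lt] at h2
    exact hcon ⟨h2.1, h2.2.le⟩
  have hcs : HasCompactSupport (gfun q A B) := by
    apply HasCompactSupport.of_support_subset_isCompact (isCompact_Icc (a := -z0) (b := z0))
    exact hsupp.trans Ioc_subset_Icc_self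
  have hgi : Integrable (gfun q A B) := hc.integrable_of_hasCompactSupport hcs
  have hv : ∀ y, vfun p A B s y = k * gfun q A B (k * y) := by
    intro y
    unfold vfun gfun
    rw [← hk, mul_comm y k]
  have hvi : Integrable (vfun p A B s) := by
    have : vfun p A B s = fun y => k * gfun q A B (k * y) := funext hv
    rw [this]
    exact (hgi.comp_mul_left' hkp.ne').const_mul k
  have htot : ∫ y, vfun p A B s y = ∫ z in (-z0)..z0, gfun q A B z := by
    rw [intervalIntegral.integral_eq_integral_of_support_subset hsupp]
    simp_rw [hv]
    rw [integral_const_mul, Measure.integral_comp_mul_left, abs_of_pos (inv_pos.2 hkp), smul_eq_mul]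
    field_simp
  have hright : ∫ y in Ici x, vfun p A B s y = ∫ z in (x*k)..z0, gfun q A B z := by
    rw [integral_Ici_eq_integral_Ioi]
    simp_rw [hv]
    rw [integral_const_mul, integral_comp_mul_left_Ioi _ _ hkp, smul_eq_mul, mul_comm x k,
      ← intervalIntegral.integral_interval_add_Ioi hgi.integrableOn (b := z0) hgi.integrableOn]
    rw [setIntegral_eq_zero_of_forall_eq_zero (t := Ioi z0)]
    · field_simp; simp
    · intro y hy
      apply gfun_zero q A B y hq hA hB
      exact (le_of_lt hy).trans (le_abs_self y)
  have := intervalIntegral.integral_Iio_add_Ici (b := x) hvi.integrableOn hvi.integrableOn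
  linarith

lemma exp_bound (p r : ℝ) (hp : 1 < p) (hr : 0 < r) : Real.exp (-r) ≤ p^p * r^(-p) := by
  have h1 : r / p ≤ Real.exp (r/p) := by linarith [Real.add_one_le_exp (r/p)]
  have h2 := Real.rpow_le_rpow (by positivity) h1 (by linarith : 0 ≤ p)
  rw [← Real.exp_mul, Real.div_rpow hr.le (by linarith), div_mul_cancel₀ _ (by linarith)] at h2
  have hpp : 0 < p^p := Real.rpow_pos_of_pos (by linarith) _
  have hrp : 0 < r^p := Real.rpow_pos_of_pos hr _
  rw [Real.exp_neg, Real.rpow_neg hr.le]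
  rw [div_le_iff₀ hpp] at h2
  rw [inv_le_comm₀ (Real.exp_pos _) (by positivity), mul_inv, inv_inv]
  rw [inv_mul_le_iff₀ hpp]; linarith

lemma w0_pos (L y : ℝ) (hL : 0 < L) : 0 < w0 0 L y := by
  rw [w0_eq]; positivity

lemma w0_lt (L y : ℝ) (hL : 0 < L) : w0 0 L y < L := by
  rw [w0_eq]
  exact div_lt_self hL (by linarith [Real.exp_pos (-(2*y))])

lemma w0_le_exp (L y : ℝ) (hL : 0 < L) : w0 0 L y ≤ L * Real.exp (2*y) := by
  rw [w0_eq, div_le_iff₀ (by positivity), mul_assoc, mul_add, ← Real.exp_add]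
  have := Real.exp_pos (2*y)
  simp
  nlinarith

lemma w0_strictMono (L : ℝ) (hL : 0 < L) : StrictMono (w0 0 L) := by
  intro x y h
  rw [w0_eq, w0_eq]
  apply div_lt_div_of_pos_left hL (by positivity)
  have := Real.exp_lt_exp.2 (show -(2*y) < -(2*x) by linarith)
  linarith

lemma w0_cont (L : ℝ) : Continuous (w0 0 L) := by
  have : w0 0 L = fun y => L / (1 + Real.exp (-(2*y))) := funext (w0_eq L)
  rw [this]
  exact Continuous.div (by fun_prop) (by fun_prop) (fun y => by positivity)

lemma w_bound (p L z0 : ℝ) (hp : 1 < p) (hL : 0 < L) (hz0 : 0 < z0) :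
    ∃ K : ℝ, 0 < K ∧ ∀ t r y : ℝ, 1 ≤ t → 0 < r → r^(p+1) = 1 + t →
      y + t * w0 0 L y ≤ z0 * r → w0 0 L y ≤ K * r^(-p) := by
  have hpp : 0 < p^p := Real.rpow_pos_of_pos (by linarith) _
  refine ⟨2*(z0+1) + L * p^p, by positivity, ?_⟩
  intro t r y ht hr hrt hy
  have hrp : 0 < r^(-p) := Real.rpow_pos_of_pos hr _
  rw [add_mul]
  have a1 : 0 ≤ L * p^p * r^(-p) := by positivity
  have a2 : 0 ≤ 2*(z0+1)*r^(-p) := by positivity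
  rcases le_or_gt (-r) y with h | h
  · have h1 : t * w0 0 L y ≤ (z0+1)*r := by linarith
    have h2 : r = (1+t) * r^(-p) := by
      rw [← hrt, ← Real.rpow_add hr]; simp
    have h3 : (z0+1)*r ≤ t * (2*(z0+1)*r^(-p)) := by
      have : (1+t) * ((z0+1)*r^(-p)) ≤ (2*t) * ((z0+1)*r^(-p)) := by gcongr; linarith
      calc (z0+1)*r = (1+t) * ((z0+1)*r^(-p)) := by nth_rw 1 [h2]; ring
        _ ≤ _ := this
        _ = _ := by ring
    have := le_of_mul_le_mul_left (h1.trans h3) (by linarith)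
    linarith
  · have h1 := w0_le_exp L y hL
    have h2 : Real.exp (2*y) ≤ Real.exp (-r) := Real.exp_le_exp.2 (by linarith)
    have h3 := exp_bound p r hp hr
    have := mul_le_mul_of_nonneg_left (h2.trans h3) hL.le
    linarith

theorem stmt_18 (p μ um up A B : ℝ)
    (hp : 1 < p) (hμ : 0 < μ) (hum : um < 0) (hup : 0 < up)
    (f : ℝ → ℝ) (hf1 : ContDiff ℝ 1 f) (hf3 : ContDiffOn ℝ 3 f (Set.Ici 0))
    (hfzero : ∀ u : ℝ, u ≤ 0 → f u = 0)
    (hconv : ∀ u : ℝ, 0 ≤ u →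
      0 < derivWithin (derivWithin f (Set.Ici 0)) (Set.Ici 0) u)
    (linv : ℝ → ℝ) (hlinv : ∀ u ∈ Set.Icc (0:ℝ) up, linv (deriv f u) = u)
    (Y : ℝ → ℝ → ℝ)
    (hY : ∀ t x : ℝ, 0 ≤ t → Y t x + t * w0 0 (deriv f up) (Y t x) = x)
    (hB : B = (p - 1) / (2 * μ * p * (p + 1))) (hA : 0 < A)
    (hnorm : 2 * A ^ ((p+1)/(2*(p-1))) * B ^ (-(1:ℝ)/2) *
      (∫ θ in (0:ℝ)..(Real.pi/2), Real.sin θ ^ ((p+1)/(p-1))) = -um) :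
    -- `Ur` is the smooth approximate rarefaction wave connecting `0` to `u₊`,
    -- `U` is the viscous contact wave connecting `u₋` to `0`.
    let Ur : ℝ → ℝ → ℝ := fun t x => linv (w0 0 (deriv f up) (Y t x))
    let U : ℝ → ℝ → ℝ := fun t x => um + ∫ y in Set.Iio x, vfun p A B (1 + t) y
    (∀ t : ℝ, 0 ≤ t → ∃! X : ℝ, U t X + Ur t X = 0) ∧
    (∃ T₀ : ℝ, 0 < T₀ ∧ ∃ C : ℝ, 0 < C ∧ ∀ t : ℝ, T₀ ≤ t → ∀ X : ℝ,
      U t X + Ur t X = 0 →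
      |Real.sqrt (A / B) - X * (1 + t) ^ (-(1:ℝ)/(p+1))|
        ≤ C * (1 + t) ^ (-(p - 1) / (p + 1))) := by
  intro Ur U
  have hBp : 0 < B := by
    rw [hB]
    have : 0 < p - 1 := by linarith
    have : 0 < p := by linarith
    positivity
  obtain ⟨hL, hlinv0, c, hc, hlin⟩ := linv_facts up hup f hf1 hf3 hfzero hconv linv hlinv
  set L := deriv f up with hLdef
  have hp1 : 0 < p - 1 := by linarith
  have hq : 0 < 1/(p-1) := by positivity
  set q := 1/(p-1) with hqd
  set z0 := √(A/B) with hz0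
  have hz0p : 0 < z0 := Real.sqrt_pos.2 (by positivity)
  have hgc := gfun_cont q A B hq
  have hii : ∀ a b, IntervalIntegrable (gfun q A B) volume a b :=
    fun a b => hgc.intervalIntegrable a b
  have htot : ∫ z in (-z0)..z0, gfun q A B z = -um := by
    rw [gfun_int q A B hq hA hBp, ← hnorm, ← hz0]
    have e1 : 2*q+1 = (p+1)/(p-1) := by rw [hqd]; field_simp; ring
    have e2 : (p+1)/(2*(p-1)) = q + 1/2 := by rw [hqd]; field_simp; ring
    rw [e1, e2, Real.rpow_add hA, hz0, Real.sqrt_div hA.le, Real.sqrt_eq_rpow, Real.sqrt_eq_rpow,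
      neg_div, Real.rpow_neg hBp.le]
    ring
  set H : ℝ → ℝ := fun z => ∫ y in z..z0, gfun q A B y with hH
  have hHc : Continuous H := by
    have : H = fun z => -∫ y in z0..z, gfun q A B y := by
      ext z; exact intervalIntegral.integral_symm _ _
    rw [this]
    exact (intervalIntegral.continuous_primitive hii z0).neg
  have hHanti : Antitone H := by
    intro a b hab
    have h1 := intervalIntegral.integral_add_adjacent_intervals (hii a b) (hii b z0)
    have h2 : 0 ≤ ∫ y in a..b, gfun q A B y :=
      intervalIntegral.integral_nonneg hab (fun _ _ => gfun_nonneg _ _ _ _)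
    simp only [hH]
    linarith
  have hHz0 : H z0 = 0 := by simp [hH]
  have hHmz0 : H (-z0) = -um := htot
  have hU : ∀ t X, 0 ≤ t → U t X = - H (X * (1+t)^(-(1:ℝ)/(p+1))) := by
    intro t X ht
    simp only [U]
    rw [vfun_int p A B (1+t) X hp (by linarith) hA hBp, ← hqd, ← hz0, htot]
    ring
  have hwI : ∀ y, w0 0 L y ∈ Icc 0 L := fun y => ⟨(w0_pos L y hL).le, (w0_lt L y hL).le⟩
  have hYlip : ∀ t, 0 ≤ t → ∀ a b, a < b → Y t a < Y t b ∧ Y t b - Y t a ≤ b - a := by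
    intro t ht a b hab
    have ha := hY t a ht
    have hb := hY t b ht
    have hlt : Y t a < Y t b := by
      by_contra hcon
      push Not at hcon
      have := mul_le_mul_of_nonneg_left ((w0_strictMono L hL).monotone hcon) ht
      linarith
    refine ⟨hlt, ?_⟩
    have := mul_le_mul_of_nonneg_left ((w0_strictMono L hL).monotone hlt.le) ht
    linarith
  have hYc : ∀ t, 0 ≤ t → Continuous (Y t) := by
    intro t ht
    have : LipschitzWith 1 (Y t) := by
      apply LipschitzWith.of_le_add
      intro a b
      rw [Real.dist_eq]
      rcases lt_trichotomy a b with h | h | h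
      · linarith [(hYlip t ht a b h).1, abs_nonneg (a - b)]
      · rw [h]; simp
      · linarith [(hYlip t ht b a h).2, le_abs_self (a - b)]
    exact this.continuous
  have hlinvc : ContinuousOn linv (Icc 0 L) := by
    have : LipschitzOnWith (Real.toNNReal (1/c)) linv (Icc 0 L) := by
      apply LipschitzOnWith.of_dist_le_mul
      intro a ha b hb
      rw [Real.coe_toNNReal _ (by positivity), Real.dist_eq, Real.dist_eq, one_div,
        ← div_eq_inv_mul, le_div_iff₀ hc]
      rcases lt_trichotomy a b with h | h | h
      · obtain ⟨h1, h2⟩ := hlin a ha b hb h.le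
        rw [abs_of_neg (by linarith [h2 h]), abs_of_neg (by linarith)]
        linarith
      · rw [h]; simp
      · obtain ⟨h1, h2⟩ := hlin b hb a ha h.le
        rw [abs_of_pos (by linarith [h2 h]), abs_of_pos (by linarith)]
        linarith
    exact this.continuousOn
  have hUrc : ∀ t, 0 ≤ t → Continuous (Ur t) := by
    intro t ht
    exact hlinvc.comp_continuous ((w0_cont L).comp (hYc t ht)) (fun x => hwI _)
  have hUrmono : ∀ t, 0 ≤ t → StrictMono (Ur t) := by
    intro t ht a b hab
    have := w0_strictMono L hL (hYlip t ht a b hab).1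
    exact (hlin _ (hwI _) _ (hwI _) this.le).2 this
  have hUrpos : ∀ t x, 0 < Ur t x := by
    intro t x
    have := (hlin 0 ⟨le_rfl, hL.le⟩ _ (hwI (Y t x)) (hwI _).1).2 (w0_pos L _ hL)
    rwa [hlinv0] at this
  have hUrle : ∀ t x, c * Ur t x ≤ w0 0 L (Y t x) := by
    intro t x
    have := (hlin 0 ⟨le_rfl, hL.le⟩ _ (hwI (Y t x)) (hwI _).1).1
    rwa [hlinv0, sub_zero, sub_zero] at this
  have hYle : ∀ t x, 0 ≤ t → Y t x ≤ x := by
    intro t x ht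
    have := hY t x ht
    have := mul_nonneg ht (hwI (Y t x)).1
    linarith
  constructor
  · intro t ht
    have hk : 0 < (1+t)^(-(1:ℝ)/(p+1)) := Real.rpow_pos_of_pos (by linarith) _
    have hUt := fun X => hU t X ht
    set k := (1+t)^(-(1:ℝ)/(p+1)) with hkd
    have hmono : StrictMono (fun X => U t X + Ur t X) := by
      intro a b hab
      have h1 := hUrmono t ht hab
      have h2 : H (b * k) ≤ H (a * k) := hHanti (by gcongr)
      simp only [hUt]
      linarith
    have hcont : Continuous (fun X => U t X + Ur t X) := by
      have : (fun X => U t X + Ur t X) = fun X => - H (X * k) + Ur t X := by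
        ext X; rw [hUt]
      rw [this]
      exact ((hHc.comp (by fun_prop)).neg).add (hUrc t ht)
    obtain ⟨x1, hx1⟩ : ∃ x1, 0 ≤ U t x1 + Ur t x1 := by
      refine ⟨z0 / k, ?_⟩
      rw [hUt, div_mul_cancel₀ _ hk.ne', hHz0]
      linarith [hUrpos t (z0/k)]
    obtain ⟨x2, hx2⟩ : ∃ x2, U t x2 + Ur t x2 ≤ 0 := by
      have hum' : 0 < -um := by linarith
      refine ⟨min (-z0/k) (Real.log (c * (-um) / L) / 2), ?_⟩
      set x2 := min (-z0/k) (Real.log (c * (-um) / L) / 2) with hx2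
      have h1 : x2 * k ≤ -z0 := by
        rw [← le_div_iff₀ hk]; exact min_le_left _ _
      have h2 : -um ≤ H (x2 * k) := by rw [← hHmz0]; exact hHanti h1
      have h3 : Real.exp (2 * Y t x2) ≤ c * (-um) / L := by
        rw [← Real.le_log_iff_exp_le (by positivity)]
        have h4 : x2 ≤ Real.log (c * (-um) / L) / 2 := min_le_right _ _
        linarith [hYle t x2 ht]
      have h4 := (hUrle t x2).trans (w0_le_exp L _ hL)
      rw [le_div_iff₀ hL] at h3
      have h5 : Ur t x2 ≤ -um := by
        apply le_of_mul_le_mul_left _ hc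
        linarith
      rw [hUt]
      linarith
    obtain ⟨X, hX⟩ := mem_range_of_exists_le_of_exists_ge hcont ⟨x2, hx2⟩ ⟨x1, hx1⟩
    refine ⟨X, hX, ?_⟩
    intro X' hX'
    exact hmono.injective (hX'.trans hX.symm)
  · obtain ⟨K, hK, hKb⟩ := w_bound p L z0 hp hL hz0p
    set c' := (B * z0 / 2)^q / 2 with hc'
    have hc'p : 0 < c' := by positivity
    have hlow : ∀ z, 0 ≤ z → z ≤ z0 → c' * (z0 - z)^(q+1) ≤ H z := fun z h1 h2 =>
      gfun_lower q A B z hq hA hBp h1 h2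
    have hpp1 : 0 < p + 1 := by linarith
    have hpp : 0 < p := by linarith
    have htend : Tendsto (fun t : ℝ => K / c * (1+t)^(-(p/(p+1)))) atTop (nhds (K/c*0)) := by
      apply Tendsto.const_mul
      exact (tendsto_rpow_neg_atTop (by positivity)).comp (tendsto_atTop_add_const_left _ 1 tendsto_id)
    rw [mul_zero] at htend
    have hev := htend.eventually (gt_mem_nhds (show 0 < c' * z0^(q+1) by positivity))
    obtain ⟨T, hT⟩ := eventually_atTop.1 hev
    refine ⟨max T 1, by positivity, (K/c/c')^(1/(q+1)), by positivity, ?_⟩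
    intro t ht X hX
    have ht1 : 1 ≤ t := (le_max_right _ _).trans ht
    have hTt := hT t ((le_max_left _ _).trans ht)
    have ht0 : 0 ≤ t := by linarith
    have hs : 0 < 1 + t := by linarith
    set r := (1+t)^(1/(p+1)) with hr
    have hrp : 0 < r := Real.rpow_pos_of_pos hs _
    have hk : (1+t)^(-(1:ℝ)/(p+1)) = r⁻¹ := by
      rw [hr, ← Real.rpow_neg hs.le, neg_div]
    have hrt : r^(p+1) = 1 + t := by
      rw [hr, ← Real.rpow_mul hs.le, one_div, inv_mul_cancel₀ hpp1.ne', Real.rpow_one]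
    have hrmp : (1+t)^(-(p/(p+1))) = r^(-p) := by
      rw [hr, ← Real.rpow_mul hs.le]; congr 1; ring
    rw [hU t X ht0, hk] at hX
    rw [hk]
    rw [hrmp] at hTt
    set z := X * r⁻¹ with hz
    have hHU : H z = Ur t X := by linarith
    have hzlt : z < z0 := by
      by_contra hcon
      push Not at hcon
      have := hHanti hcon
      rw [hHz0, hHU] at this
      linarith [hUrpos t X]
    have hXz : X = z * r := by rw [hz]; field_simp
    have hw := hKb t r (Y t X) ht1 hrp hrt (by
      rw [hY t X ht0, hXz]; gcongr)
    have hHle : H z ≤ K / c * r^(-p) := by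
      rw [hHU, div_mul_eq_mul_div, le_div_iff₀ hc]
      linarith [hUrle t X]
    have hz0' : 0 ≤ z := by
      by_contra hcon
      push Not at hcon
      have h1 := hHanti hcon.le
      have h2 := hlow 0 le_rfl hz0p.le
      rw [sub_zero] at h2
      linarith
    have h1 := (hlow z hz0' hzlt.le).trans hHle
    have hq1 : 0 < q + 1 := by linarith
    have h2 : (z0 - z)^(q+1) ≤ K/c/c' * r^(-p) := by
      rw [div_mul_eq_mul_div, le_div_iff₀ hc'p]; linarith
    have h3 := Real.rpow_le_rpow (Real.rpow_nonneg (by linarith) _) h2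
      (show 0 ≤ 1/(q+1) by positivity)
    rw [← Real.rpow_mul (by linarith), mul_one_div_cancel hq1.ne', Real.rpow_one,
      Real.mul_rpow (by positivity) (Real.rpow_nonneg hrp.le _), hr, ← Real.rpow_mul hs.le,
      ← Real.rpow_mul hs.le] at h3
    rw [abs_of_pos (by linarith)]
    convert h3 using 3
    rw [hqd]; field_simp; ring
end
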